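/- Let n ≥ 1, R > 0, and let f ∈ C¹(ℝ^{n+1}) have compact support contained in Q_R ∪ ∂'Q_R (in particular f vanishes outside Q_R ∪ ∂'Q_R). Then for every X ∈ Q_R one has |f(X)| ≤ (2/ω_n) ∫_{Q_R} |∇f(Y)| / |X − Y|^n dY, where ω_n is the surface area of the unit sphere 𝕊ⁿ ⊂ ℝ^{n+1}. -/

import Mathlib

open MeasureTheory Metric Set Real

noncomputable section

/-- Points of `ℝ^{n+1}` written as `X = (x, t)` with `x ∈ ℝⁿ`, `t ∈ ℝ`. -/
abbrev Pt (n : ℕ) := EuclideanSpace ℝ (Fin n) × ℝ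

/-- The box `Q_R = B_R × (0, R) ⊂ ℝ^{n+1}`. -/
def Q (n : ℕ) (R : ℝ) : Set (Pt n) :=
  (ball (0 : EuclideanSpace ℝ (Fin n)) R) ×ˢ (Ioo (0 : ℝ) R)

/-- The bottom boundary `∂'Q_R = B_R × {0}`. -/
def Q' (n : ℕ) (R : ℝ) : Set (Pt n) :=
  (ball (0 : EuclideanSpace ℝ (Fin n)) R) ×ˢ ({(0 : ℝ)} : Set ℝ)

/-- The Euclidean distance on `ℝ^{n+1} = ℝⁿ × ℝ`. -/
def edist' (n : ℕ) (X Y : Pt n) : ℝ :=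
  Real.sqrt (‖X.1 - Y.1‖ ^ 2 + (X.2 - Y.2) ^ 2)

/-- `ω_n`, the surface area of the unit sphere `𝕊ⁿ ⊂ ℝ^{n+1}`,
which equals `(n+1)` times the volume of the unit ball of `ℝ^{n+1}`. -/
def sphereArea (n : ℕ) : ℝ :=
  (n + 1) * (volume (ball (0 : EuclideanSpace ℝ (Fin (n + 1))) 1)).toReal

/-!
By the fundamental theorem of calculus along the ray from `x` in direction `-θ`,
`|f x| ≤ ∫₀^∞ |∇f (x - rθ)| dr` for each unit vector `θ`. Integrating over the sphere and writing
`dr dθ = |y|^{-n} dy` with `y = rθ` gives `ω_n |f x| ≤ ∫ |∇f y| / |x - y|ⁿ dy`.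
-/

section RieszPotential

open Module (finrank)

variable {E F : Type*} [NormedAddCommGroup E] [NormedSpace ℝ E] [NormedAddCommGroup F]
  [NormedSpace ℝ F]

lemma enorm_le_lintegral_enorm_fderiv_ray {f : E → F} (hf : ContDiff ℝ 1 f)
    (hsupp : HasCompactSupport f) (x : E) {v : E} (hv : v ≠ 0) :
    ‖f x‖ₑ ≤ ∫⁻ r in Ioi (0 : ℝ), ‖fderiv ℝ f (x - r • v) v‖ₑ := by
  have hemb : Topology.IsClosedEmbedding fun r : ℝ ↦ x + r • v :=
    (Homeomorph.addLeft x).isClosedEmbedding.comp (isClosedEmbedding_smul_left hv)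
  have hderiv (r : ℝ) : deriv (fun r : ℝ ↦ f (x + r • v)) r = fderiv ℝ f (x + r • v) v := by
    have hline : HasDerivAt (fun r : ℝ ↦ x + r • v) v r := by
      simpa using ((hasDerivAt_id r).smul_const v).const_add x
    exact ((hf.differentiable one_ne_zero _).hasFDerivAt.comp_hasDerivAt r hline).deriv
  calc ‖f x‖ₑ
      ≤ ∫⁻ r in Iic (0 : ℝ), ‖fderiv ℝ f (x + r • v) v‖ₑ := by
        simpa [hderiv] using HasCompactSupport.enorm_le_lintegral_Ici_deriv
          (f := fun r : ℝ ↦ f (x + r • v)) (by fun_prop) (hsupp.comp_isClosedEmbedding hemb) 0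
    _ = ∫⁻ r in Ici (0 : ℝ), ‖fderiv ℝ f (x - r • v) v‖ₑ := by
        rw [← (Measure.measurePreserving_neg volume).setLIntegral_comp_preimage_emb
          (MeasurableEquiv.neg ℝ).measurableEmbedding]
        simp [← sub_eq_add_neg]
    _ = ∫⁻ r in Ioi (0 : ℝ), ‖fderiv ℝ f (x - r • v) v‖ₑ :=
        setLIntegral_congr Ioi_ae_eq_Ici.symm

variable [FiniteDimensional ℝ E] [MeasurableSpace E] [BorelSpace E]
  (μ : Measure E) [μ.IsAddHaarMeasure]

lemma lintegral_eq_lintegral_toSphere [Nontrivial E] {g : E → ENNReal} (hg : Measurable g) :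
    ∫⁻ y, g y ∂μ = ∫⁻ θ : sphere (0 : E) 1, (∫⁻ r in Ioi (0 : ℝ),
      ENNReal.ofReal (r ^ (finrank ℝ E - 1)) * g (r • (θ : E))) ∂μ.toSphere := by
  have hg_polar : Measurable fun p : sphere (0 : E) 1 × Ioi (0 : ℝ) ↦ g (p.2.1 • p.1.1) := by
    fun_prop
  calc ∫⁻ y, g y ∂μ
      = ∫⁻ y : ({0}ᶜ : Set E), g y ∂(μ.comap (↑)) := by
        rw [lintegral_subtype_comap (measurableSet_singleton _).compl, restrict_compl_singleton]
    _ = ∫⁻ p : sphere (0 : E) 1 × Ioi (0 : ℝ), g (p.2.1 • p.1.1)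
          ∂(μ.toSphere.prod (.volumeIoiPow (finrank ℝ E - 1))) := by
        rw [← μ.measurePreserving_homeomorphUnitSphereProd.lintegral_comp hg_polar]
        refine lintegral_congr fun y ↦ ?_
        have hy : ‖(y : E)‖ ≠ 0 := norm_ne_zero_iff.2 y.2
        simp [smul_smul, hy]
    _ = _ := by
        rw [lintegral_prod _ hg_polar.aemeasurable]
        refine lintegral_congr fun θ ↦ ?_
        rw [Measure.volumeIoiPow, lintegral_withDensity_eq_lintegral_mul _ (by fun_prop)
          (by fun_prop)]
        exact lintegral_subtype_comap measurableSet_Ioi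
          fun r : ℝ ↦ ENNReal.ofReal (r ^ (finrank ℝ E - 1)) * g (r • (θ : E))

lemma lintegral_div_enorm_pow [Nontrivial E] {g : E → ENNReal} (hg : Measurable g) :
    ∫⁻ y, g y / ‖y‖ₑ ^ (finrank ℝ E - 1) ∂μ =
      ∫⁻ θ : sphere (0 : E) 1, (∫⁻ r in Ioi (0 : ℝ), g (r • (θ : E))) ∂μ.toSphere := by
  rw [lintegral_eq_lintegral_toSphere μ (by fun_prop)]
  refine lintegral_congr fun θ ↦ setLIntegral_congr_fun measurableSet_Ioi fun r (hr : 0 < r) ↦ ?_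
  have hnorm : ‖r • (θ : E)‖ₑ = ENNReal.ofReal r := by
    rw [← ofReal_norm, norm_smul, norm_eq_of_mem_sphere, mul_one, Real.norm_of_nonneg hr.le]
  have hr_pow : ENNReal.ofReal r ^ (finrank ℝ E - 1) ≠ 0 :=
    pow_ne_zero _ (ENNReal.ofReal_pos.2 hr).ne'
  simp only [hnorm, ENNReal.ofReal_pow hr.le]
  exact ENNReal.mul_div_cancel hr_pow (ENNReal.pow_ne_top ENNReal.ofReal_ne_top)

lemma enorm_mul_le_lintegral_enorm_fderiv_div [Nontrivial E] {f : E → F} (hf : ContDiff ℝ 1 f)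
    (hsupp : HasCompactSupport f) (x : E) :
    ‖f x‖ₑ * (finrank ℝ E * μ (ball 0 1)) ≤
      ∫⁻ y, ‖fderiv ℝ f y‖ₑ / ‖x - y‖ₑ ^ (finrank ℝ E - 1) ∂μ := by
  have hmeas : Measurable fun y ↦ ‖fderiv ℝ f (x - y)‖ₑ :=
    ((hf.continuous_fderiv one_ne_zero).comp (by fun_prop)).enorm.measurable
  have hray (θ : sphere (0 : E) 1) :
      ‖f x‖ₑ ≤ ∫⁻ r in Ioi (0 : ℝ), ‖fderiv ℝ f (x - r • (θ : E))‖ₑ := by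
    refine (enorm_le_lintegral_enorm_fderiv_ray hf hsupp x
      (ne_zero_of_mem_unit_sphere θ)).trans (lintegral_mono fun r ↦ ?_)
    simpa [← ofReal_norm] using
      ENNReal.ofReal_le_ofReal ((fderiv ℝ f (x - r • (θ : E))).le_opNorm θ)
  calc ‖f x‖ₑ * (finrank ℝ E * μ (ball 0 1))
      = ∫⁻ _ : sphere (0 : E) 1, ‖f x‖ₑ ∂μ.toSphere := by
        rw [lintegral_const, μ.toSphere_apply_univ]
    _ ≤ ∫⁻ θ : sphere (0 : E) 1, (∫⁻ r in Ioi (0 : ℝ), ‖fderiv ℝ f (x - r • (θ : E))‖ₑ)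
          ∂μ.toSphere := lintegral_mono hray
    _ = ∫⁻ y, ‖fderiv ℝ f (x - y)‖ₑ / ‖y‖ₑ ^ (finrank ℝ E - 1) ∂μ :=
        (lintegral_div_enorm_pow μ hmeas).symm
    _ = ∫⁻ y, ‖fderiv ℝ f y‖ₑ / ‖x - y‖ₑ ^ (finrank ℝ E - 1) ∂μ := by
        rw [← lintegral_sub_left_eq_self _ x]
        simp

lemma locallyIntegrable_inv_norm_pow {k : ℕ} (hk : k < finrank ℝ E) :
    LocallyIntegrable (fun y : E ↦ (‖y‖ ^ k)⁻¹) μ := by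
  refine locallyIntegrable_of_norm_le_rpow (C := 1) (α := k) (by omega) (mod_cast hk)
    (.of_forall fun y ↦ ?_) (Measurable.aestronglyMeasurable (by fun_prop))
  simp [Real.rpow_neg (norm_nonneg y)]

lemma integrable_div_norm_sub_pow {g : E → ℝ} (hg : Continuous g) (hsupp : HasCompactSupport g)
    {k : ℕ} (hk : k < finrank ℝ E) (x : E) :
    Integrable (fun y ↦ g y / ‖x - y‖ ^ k) μ := by
  have hint : Integrable (fun y ↦ g (x - y) / ‖y‖ ^ k) μ :=
    (locallyIntegrable_inv_norm_pow μ hk).integrable_smul_left_of_hasCompactSupport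
      (g := fun y ↦ g (x - y)) (by fun_prop) (hsupp.comp_homeomorph (Homeomorph.subLeft x))
  simpa using hint.comp_sub_left x

lemma norm_mul_le_integral_norm_fderiv_div [Nontrivial E] {f : E → F} (hf : ContDiff ℝ 1 f)
    (hsupp : HasCompactSupport f) (x : E) :
    ‖f x‖ * (finrank ℝ E * μ.real (ball 0 1)) ≤
      ∫ y, ‖fderiv ℝ f y‖ / ‖x - y‖ ^ (finrank ℝ E - 1) ∂μ := by
  have hint : Integrable (fun y ↦ ‖fderiv ℝ f y‖ / ‖x - y‖ ^ (finrank ℝ E - 1)) μ :=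
    integrable_div_norm_sub_pow μ (hf.continuous_fderiv one_ne_zero).norm (hsupp.fderiv ℝ).norm
      (Nat.sub_one_lt Module.finrank_pos.ne') x
  have hnonneg (y : E) : 0 ≤ ‖fderiv ℝ f y‖ / ‖x - y‖ ^ (finrank ℝ E - 1) := by positivity
  have hkernel : ∫⁻ y, ‖fderiv ℝ f y‖ₑ / ‖x - y‖ₑ ^ (finrank ℝ E - 1) ∂μ =
      ENNReal.ofReal (∫ y, ‖fderiv ℝ f y‖ / ‖x - y‖ ^ (finrank ℝ E - 1) ∂μ) := by
    rw [ofReal_integral_eq_lintegral_ofReal hint (.of_forall hnonneg)]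
    refine lintegral_congr_ae ?_
    filter_upwards [compl_mem_ae_iff.2 (measure_singleton x)] with y (hy : y ≠ x)
    have hxy : 0 < ‖x - y‖ := norm_sub_pos_iff.2 hy.symm
    rw [ENNReal.ofReal_div_of_pos (pow_pos hxy _), ENNReal.ofReal_pow hxy.le, ofReal_norm,
      ofReal_norm]
  have hbound := (enorm_mul_le_lintegral_enorm_fderiv_div μ hf hsupp x).trans_eq hkernel
  simpa [measureReal_def] using ENNReal.toReal_le_of_le_ofReal (integral_nonneg hnonneg) hbound

end RieszPotential

section ProductCoordinates

variable {E₁ E₂ F : Type*} [NormedAddCommGroup E₁] [NormedSpace ℝ E₁] [NormedAddCommGroup E₂]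
  [NormedSpace ℝ E₂] [NormedAddCommGroup F] [NormedSpace ℝ F]

-- `E₁ × E₂` carries the maximum norm, so its unit ball, over which the right-hand operator norm is
-- a supremum, contains the Euclidean one.
lemma norm_fderiv_comp_ofLp_le (f : E₁ × E₂ → F) (y : WithLp 2 (E₁ × E₂)) :
    ‖fderiv ℝ (f ∘ WithLp.ofLp) y‖ ≤ ‖fderiv ℝ f y.ofLp‖ := by
  let Φ : WithLp 2 (E₁ × E₂) ≃L[ℝ] E₁ × E₂ := WithLp.prodContinuousLinearEquiv 2 ℝ E₁ E₂
  have hΦ : ‖(Φ : WithLp 2 (E₁ × E₂) →L[ℝ] E₁ × E₂)‖ ≤ 1 :=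
    ContinuousLinearMap.opNorm_le_bound _ zero_le_one fun z ↦ by
      rw [one_mul]
      exact max_le (WithLp.norm_fst_le _ z) (WithLp.norm_snd_le _ z)
  calc ‖fderiv ℝ (f ∘ Φ) y‖
      = ‖(fderiv ℝ f (Φ y)).comp (Φ : WithLp 2 (E₁ × E₂) →L[ℝ] E₁ × E₂)‖ := by
        rw [Φ.comp_right_fderiv]
    _ ≤ ‖fderiv ℝ f (Φ y)‖ * ‖(Φ : WithLp 2 (E₁ × E₂) →L[ℝ] E₁ × E₂)‖ :=
        ContinuousLinearMap.opNorm_comp_le _ _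
    _ ≤ ‖fderiv ℝ f (Φ y)‖ := mul_le_of_le_one_right (norm_nonneg _) hΦ

lemma norm_toLp_sub_toLp {n : ℕ} (X Y : Pt n) :
    ‖WithLp.toLp 2 X - WithLp.toLp 2 Y‖ = edist' n X Y := by
  rw [← WithLp.toLp_sub, WithLp.prod_norm_eq_of_L2]
  simp [edist']

lemma finrank_withLp_pt (n : ℕ) : Module.finrank ℝ (WithLp 2 (Pt n)) = n + 1 := by
  simp [(WithLp.linearEquiv 2 ℝ (Pt n)).finrank_eq]

lemma sphereArea_pos (n : ℕ) : 0 < sphereArea n :=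
  mul_pos (by positivity) (ENNReal.toReal_pos
    (measure_ball_pos _ _ one_pos).ne' measure_ball_lt_top.ne)

lemma sphereArea_eq_finrank_mul_volume_ball {E : Type*} [NormedAddCommGroup E]
    [InnerProductSpace ℝ E] [FiniteDimensional ℝ E] [MeasurableSpace E] [BorelSpace E] {n : ℕ}
    (hE : Module.finrank ℝ E = n + 1) :
    sphereArea n = Module.finrank ℝ E * volume.real (ball (0 : E) 1) := by
  have : Nontrivial E := Module.nontrivial_of_finrank_pos (R := ℝ) (by omega)
  rw [sphereArea, measureReal_def, InnerProductSpace.volume_ball, InnerProductSpace.volume_ball, hE]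
  simp

lemma norm_mul_sphereArea_le_integral {n : ℕ} {f : Pt n → F} (hf : ContDiff ℝ 1 f)
    (hsupp : HasCompactSupport f) (X : Pt n) :
    ‖f X‖ * sphereArea n ≤ ∫ Y, ‖fderiv ℝ f Y‖ / edist' n X Y ^ n := by
  let Φ : WithLp 2 (Pt n) ≃L[ℝ] Pt n := WithLp.prodContinuousLinearEquiv 2 ℝ _ _
  have hg : ContDiff ℝ 1 (f ∘ Φ) := hf.comp Φ.contDiff
  have hg_supp : HasCompactSupport (f ∘ Φ) := hsupp.comp_homeomorph Φ.toHomeomorph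
  have hd : Module.finrank ℝ (WithLp 2 (Pt n)) - 1 = n := by simp [finrank_withLp_pt]
  have hn : n < Module.finrank ℝ (WithLp 2 (Pt n)) := by simp [finrank_withLp_pt]
  have : Nontrivial (WithLp 2 (Pt n)) := Module.nontrivial_of_finrank_pos (R := ℝ) (by omega)
  calc ‖f X‖ * sphereArea n
      ≤ ∫ y, ‖fderiv ℝ (f ∘ Φ) y‖ / ‖WithLp.toLp 2 X - y‖ ^ n := by
        rw [sphereArea_eq_finrank_mul_volume_ball (finrank_withLp_pt n)]
        have hbound := norm_mul_le_integral_norm_fderiv_div volume hg hg_supp (WithLp.toLp 2 X)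
        rwa [hd] at hbound
    _ ≤ ∫ y, ‖fderiv ℝ f (Φ y)‖ / ‖WithLp.toLp 2 X - y‖ ^ n := by
        refine integral_mono
          (integrable_div_norm_sub_pow _ (hg.continuous_fderiv one_ne_zero).norm
            (hg_supp.fderiv ℝ).norm hn _)
          (integrable_div_norm_sub_pow _
            ((hf.continuous_fderiv one_ne_zero).norm.comp Φ.continuous)
            ((hsupp.fderiv ℝ).norm.comp_homeomorph Φ.toHomeomorph) hn _) fun y ↦ ?_
        exact div_le_div_of_nonneg_right (norm_fderiv_comp_ofLp_le f y) (by positivity)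
    _ = ∫ Y, ‖fderiv ℝ f Y‖ / edist' n X Y ^ n := by
        simp only [← norm_toLp_sub_toLp]
        exact (WithLp.volume_preserving_ofLp (EuclideanSpace ℝ (Fin n)) ℝ).integral_comp
          (MeasurableEquiv.toLp 2 (Pt n)).symm.measurableEmbedding
          fun Y ↦ ‖fderiv ℝ f Y‖ / ‖WithLp.toLp 2 X - WithLp.toLp 2 Y‖ ^ n

theorem riesz_potential_bound_general {n : ℕ} {f : Pt n → F} (hf : ContDiff ℝ 1 f)
    (hsupp : HasCompactSupport f) {s : Set (Pt n)} (hs : tsupport f ≤ᵐ[volume] s) (X : Pt n) :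
    ‖f X‖ ≤ 1 / sphereArea n * ∫ Y in s, ‖fderiv ℝ f Y‖ / edist' n X Y ^ n := by
  have hs_integral : ∫ Y in s, ‖fderiv ℝ f Y‖ / edist' n X Y ^ n =
      ∫ Y, ‖fderiv ℝ f Y‖ / edist' n X Y ^ n := by
    refine setIntegral_eq_integral_of_ae_compl_eq_zero ?_
    filter_upwards [hs] with Y hY hYs
    have hfderiv : fderiv ℝ f Y = 0 := by
      by_contra hne
      exact hYs (hY (support_fderiv_subset ℝ hne))
    simp [hfderiv]
  rw [hs_integral, one_div_mul_eq_div, le_div_iff₀ (sphereArea_pos n)]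
  exact norm_mul_sphereArea_le_integral hf hsupp X

end ProductCoordinates

lemma Q_union_Q'_ae_eq (n : ℕ) (R : ℝ) : (Q n R ∪ Q' n R : Set (Pt n)) =ᵐ[volume] Q n R := by
  refine union_ae_eq_left_of_ae_eq_empty (ae_eq_empty.2 ?_)
  rw [Q', Measure.volume_eq_prod, Measure.prod_prod]
  simp

/-- **Riesz-potential bound** (inequality (2.2)): if `f ∈ C¹` has compact support
contained in `Q_R ∪ ∂'Q_R`, then for every `X ∈ Q_R`,
`|f(X)| ≤ (2/ω_n) ∫_{Q_R} |∇f(Y)|/|X − Y|ⁿ dY`. -/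
theorem riesz_potential_bound (n : ℕ) (hn : 1 ≤ n) (R : ℝ) (hR : 0 < R)
    (f : Pt n → ℝ) (hf : ContDiff ℝ 1 f) (hsupp : HasCompactSupport f)
    (hsub : tsupport f ⊆ Q n R ∪ Q' n R) :
    ∀ X ∈ Q n R,
      |f X| ≤ (2 / sphereArea n) *
        ∫ Y in Q n R, ‖fderiv ℝ f Y‖ / (edist' n X Y) ^ n := by
  intro X _
  have hQ : tsupport f ≤ᵐ[volume] Q n R := hsub.eventuallyLE.trans (Q_union_Q'_ae_eq n R).le
  have hint : 0 ≤ ∫ Y in Q n R, ‖fderiv ℝ f Y‖ / (edist' n X Y) ^ n :=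
    integral_nonneg fun Y ↦ by unfold edist'; positivity
  have hω : 0 < sphereArea n := sphereArea_pos n
  exact (riesz_potential_bound_general hf hsupp hQ X).trans (by gcongr; exact one_le_two)
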